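/- Let A and B be commutative rings, let R be a commutative ring equipped with ring homomorphisms f : A → R and g : B → R, let M be an A-module and N a B-module. View A ⊗_ℤ B as a commutative ring and R as an (A ⊗_ℤ B)-algebra via a ⊗ b ↦ f(a)g(b), and give M ⊗_ℤ N its natural (A ⊗_ℤ B)-module structure ((a ⊗ b) · (m ⊗ n) = (a·m) ⊗ (b·n)). Then there is an isomorphism of R-modules R ⊗_{A ⊗_ℤ B} (M ⊗_ℤ N) ≅ (R ⊗_A M) ⊗_R (R ⊗_B N). -/

import Mathlib

open scoped TensorProduct

/-!
Extension of scalars represents semilinear maps: `R`-linear maps `R ⊗[A] M → P` are the same as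
additive maps `M → P` that are semilinear along `A → R`. Both sides of the isomorphism therefore
represent biadditive maps `φ` from `M × N` to an `R`-module that satisfy
`φ (a • m) (b • n) = (f a * g b) • φ m n`: an `R`-linear map out of either side is determined by its
values on the elements `1 ⊗ (m ⊗ n)`, respectively `(1 ⊗ m) ⊗ (1 ⊗ n)`, and the universal maps
give mutually inverse `R`-linear maps exchanging these generators.
-/

section SemilinearLift

variable {A R M P : Type*} [CommSemiring A] [CommSemiring R] [Algebra A R]
  [AddCommMonoid M] [Module A M] [AddCommMonoid P] [Module R P]

theorem one_tmul_smul_eq_algebraMap_smul (a : A) (m : M) :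
    (1 : R) ⊗ₜ[A] (a • m) = algebraMap A R a • ((1 : R) ⊗ₜ[A] m) := by
  rw [TensorProduct.tmul_smul, algebraMap_smul]

/-- The universal property of extension of scalars, for maps into an `R`-module `P` that carries
no `A`-module structure of its own: such maps out of `M` are semilinear along `algebraMap A R`.
This is `LinearMap.liftBaseChangeEquiv` without the choice of an action of `A` on `P`. -/
noncomputable def semilinearLiftEquiv :
    (M →ₛₗ[algebraMap A R] P) ≃ₗ[R] (R ⊗[A] M →ₗ[R] P) where
  toFun l :=
    letI := Module.compHom P (algebraMap A R)
    haveI : IsScalarTower A R P := .of_algebraMap_smul fun _ _ ↦ rfl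
    LinearMap.liftBaseChange R { l with map_smul' := l.map_smulₛₗ }
  invFun F :=
    { toFun m := F (1 ⊗ₜ m)
      map_add' m m' := by rw [TensorProduct.tmul_add, map_add]
      map_smul' a m := by rw [one_tmul_smul_eq_algebraMap_smul, map_smul] }
  map_add' l l' := by
    ext x
    induction x <;> simp_all [add_add_add_comm]
  map_smul' r l := by
    ext x
    induction x <;> simp_all [smul_comm r]
  left_inv l := by
    ext m
    simp
  right_inv F := by
    ext x
    induction x <;> simp_all [← map_smul, TensorProduct.smul_tmul']

@[simp]
theorem semilinearLiftEquiv_tmul (l : M →ₛₗ[algebraMap A R] P) (r : R) (m : M) :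
    semilinearLiftEquiv l (r ⊗ₜ m) = r • l m := by
  simp [semilinearLiftEquiv]

theorem linearMap_ext_one_tmul {F G : R ⊗[A] M →ₗ[R] P}
    (h : ∀ m : M, F (1 ⊗ₜ m) = G (1 ⊗ₜ m)) : F = G :=
  semilinearLiftEquiv.symm.injective (LinearMap.ext h)

end SemilinearLift

section TensorOfBaseChanges

variable {k A B R M N : Type*} [CommSemiring k] [CommSemiring A] [CommSemiring B] [CommSemiring R]
  [Algebra k A] [Algebra k B] [Algebra A R] [Algebra B R]
  [AddCommMonoid M] [Module k M] [Module A M]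
  [AddCommMonoid N] [Module k N] [Module B N]

section OneTmul

variable (k A B R M N) [Algebra k R] [IsScalarTower k A R] [IsScalarTower k B R]
  [IsScalarTower k A M] [IsScalarTower k B N]

/-- The `k`-linear map `m ⊗ n ↦ (1 ⊗ m) ⊗ (1 ⊗ n)` from the tensor product of two modules to the
tensor product of their extensions of scalars to `R`. -/
noncomputable def tensorToTensorBaseChanges : M ⊗[k] N →ₗ[k] (R ⊗[A] M) ⊗[R] (R ⊗[B] N) :=
  TensorProduct.mapOfCompatibleSMul R k k (R ⊗[A] M) (R ⊗[B] N) ∘ₗ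
    TensorProduct.map ((TensorProduct.mk A R M 1).restrictScalars k)
      ((TensorProduct.mk B R N 1).restrictScalars k)

variable {k A B R M N}

@[simp]
theorem tensorToTensorBaseChanges_tmul (m : M) (n : N) :
    tensorToTensorBaseChanges k A B R M N (m ⊗ₜ n) = (1 ⊗ₜ m) ⊗ₜ (1 ⊗ₜ n) :=
  rfl

theorem tensorToTensorBaseChanges_smul [Algebra (A ⊗[k] B) R] [Module (A ⊗[k] B) (M ⊗[k] N)]
    (hR : ∀ (a : A) (b : B),
      algebraMap (A ⊗[k] B) R (a ⊗ₜ b) = algebraMap A R a * algebraMap B R b)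
    (hMN : ∀ (a : A) (b : B) (m : M) (n : N),
      (a ⊗ₜ[k] b) • (m ⊗ₜ[k] n) = (a • m) ⊗ₜ[k] (b • n))
    (s : A ⊗[k] B) (x : M ⊗[k] N) :
    tensorToTensorBaseChanges k A B R M N (s • x) =
      algebraMap (A ⊗[k] B) R s • tensorToTensorBaseChanges k A B R M N x := by
  induction s with
  | zero => simp only [zero_smul, map_zero]
  | add s t hs ht => simp only [add_smul, map_add, hs, ht]
  | tmul a b =>
    induction x with
    | zero => simp only [smul_zero, map_zero]
    | add x y hx hy => simp only [smul_add, map_add, hx, hy]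
    | tmul m n =>
      simp only [hMN, hR, tensorToTensorBaseChanges_tmul, one_tmul_smul_eq_algebraMap_smul,
        TensorProduct.smul_tmul_smul]

end OneTmul

variable [Algebra (A ⊗[k] B) R] [Module (A ⊗[k] B) (M ⊗[k] N)]

theorem one_tmul_smul_tmul_smul
    (hR : ∀ (a : A) (b : B),
      algebraMap (A ⊗[k] B) R (a ⊗ₜ b) = algebraMap A R a * algebraMap B R b)
    (hMN : ∀ (a : A) (b : B) (m : M) (n : N),
      (a ⊗ₜ[k] b) • (m ⊗ₜ[k] n) = (a • m) ⊗ₜ[k] (b • n))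
    (a : A) (b : B) (m : M) (n : N) :
    (1 : R) ⊗ₜ[A ⊗[k] B] ((a • m) ⊗ₜ[k] (b • n)) =
      (algebraMap A R a * algebraMap B R b) • ((1 : R) ⊗ₜ[A ⊗[k] B] (m ⊗ₜ[k] n)) := by
  rw [← hMN, one_tmul_smul_eq_algebraMap_smul, hR]

variable (hR : ∀ (a : A) (b : B),
    algebraMap (A ⊗[k] B) R (a ⊗ₜ b) = algebraMap A R a * algebraMap B R b)
  (hMN : ∀ (a : A) (b : B) (m : M) (n : N),
    (a ⊗ₜ[k] b) • (m ⊗ₜ[k] n) = (a • m) ⊗ₜ[k] (b • n))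

/-- The map `(m, n) ↦ 1 ⊗ (m ⊗ n)` from `M × N` to the extension of scalars of `M ⊗[k] N`,
bundled as semilinear along `A → R` in `m` and along `B → R` in `n`. -/
noncomputable def oneTmulTmulBilinear :
    M →ₛₗ[algebraMap A R] N →ₛₗ[algebraMap B R] R ⊗[A ⊗[k] B] (M ⊗[k] N) :=
  LinearMap.mk₂'ₛₗ _ _ (fun m n ↦ 1 ⊗ₜ (m ⊗ₜ n))
    (fun m m' n ↦ by rw [TensorProduct.add_tmul, TensorProduct.tmul_add])
    (fun a m n ↦ by simpa using one_tmul_smul_tmul_smul hR hMN a 1 m n)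
    (fun m n n' ↦ by rw [TensorProduct.tmul_add, TensorProduct.tmul_add])
    (fun b m n ↦ by simpa using one_tmul_smul_tmul_smul hR hMN 1 b m n)

/-- The `R`-linear map `(1 ⊗ m) ⊗ (1 ⊗ n) ↦ 1 ⊗ (m ⊗ n)`. -/
noncomputable def tensorBaseChangesToBaseChange :
    (R ⊗[A] M) ⊗[R] (R ⊗[B] N) →ₗ[R] R ⊗[A ⊗[k] B] (M ⊗[k] N) :=
  TensorProduct.lift <| semilinearLiftEquiv <|
    semilinearLiftEquiv.toLinearMap.comp (oneTmulTmulBilinear hR hMN)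

@[simp]
theorem tensorBaseChangesToBaseChange_one_tmul_tmul_one_tmul (m : M) (n : N) :
    tensorBaseChangesToBaseChange hR hMN ((1 ⊗ₜ m) ⊗ₜ (1 ⊗ₜ n)) = 1 ⊗ₜ (m ⊗ₜ n) := by
  simp [tensorBaseChangesToBaseChange, oneTmulTmulBilinear]

variable [Algebra k R] [IsScalarTower k A R] [IsScalarTower k B R]
  [IsScalarTower k A M] [IsScalarTower k B N]

/-- The `R`-linear map `1 ⊗ (m ⊗ n) ↦ (1 ⊗ m) ⊗ (1 ⊗ n)`. -/
noncomputable def baseChangeToTensorBaseChanges :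
    R ⊗[A ⊗[k] B] (M ⊗[k] N) →ₗ[R] (R ⊗[A] M) ⊗[R] (R ⊗[B] N) :=
  semilinearLiftEquiv
    { tensorToTensorBaseChanges k A B R M N with
      map_smul' := tensorToTensorBaseChanges_smul hR hMN }

@[simp]
theorem baseChangeToTensorBaseChanges_one_tmul_tmul (m : M) (n : N) :
    baseChangeToTensorBaseChanges hR hMN (1 ⊗ₜ (m ⊗ₜ n)) = (1 ⊗ₜ m) ⊗ₜ (1 ⊗ₜ n) := by
  simp [baseChangeToTensorBaseChanges]

theorem baseChangeToTensorBaseChanges_comp_tensorBaseChangesToBaseChange :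
    baseChangeToTensorBaseChanges hR hMN ∘ₗ tensorBaseChangesToBaseChange hR hMN = .id := by
  refine TensorProduct.ext <| linearMap_ext_one_tmul fun m ↦ linearMap_ext_one_tmul fun n ↦ ?_
  simp

theorem tensorBaseChangesToBaseChange_comp_baseChangeToTensorBaseChanges :
    tensorBaseChangesToBaseChange hR hMN ∘ₗ baseChangeToTensorBaseChanges hR hMN = .id := by
  refine linearMap_ext_one_tmul fun x ↦ ?_
  induction x with
  | zero => simp only [TensorProduct.tmul_zero, map_zero]
  | add x y hx hy => simp only [TensorProduct.tmul_add, map_add, hx, hy]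
  | tmul m n => simp

end TensorOfBaseChanges

theorem baseChange_tensor_iso_tensor_of_baseChanges_general
    {k A B R M N : Type*} [CommSemiring k] [CommSemiring A] [CommSemiring B] [CommSemiring R]
    [Algebra k A] [Algebra k B] [Algebra k R] [Algebra A R] [Algebra B R]
    [IsScalarTower k A R] [IsScalarTower k B R]
    [AddCommMonoid M] [Module k M] [Module A M] [IsScalarTower k A M]
    [AddCommMonoid N] [Module k N] [Module B N] [IsScalarTower k B N]
    [Algebra (A ⊗[k] B) R] [Module (A ⊗[k] B) (M ⊗[k] N)]
    (hR : ∀ (a : A) (b : B),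
      algebraMap (A ⊗[k] B) R (a ⊗ₜ b) = algebraMap A R a * algebraMap B R b)
    (hMN : ∀ (a : A) (b : B) (m : M) (n : N),
      (a ⊗ₜ[k] b) • (m ⊗ₜ[k] n) = (a • m) ⊗ₜ[k] (b • n)) :
    ∃ e : R ⊗[A ⊗[k] B] (M ⊗[k] N) ≃ₗ[R] (R ⊗[A] M) ⊗[R] (R ⊗[B] N),
      ∀ (m : M) (n : N), e (1 ⊗ₜ (m ⊗ₜ n)) = (1 ⊗ₜ m) ⊗ₜ (1 ⊗ₜ n) :=
  ⟨.ofLinearMap (baseChangeToTensorBaseChanges hR hMN) (tensorBaseChangesToBaseChange hR hMN)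
      (baseChangeToTensorBaseChanges_comp_tensorBaseChangesToBaseChange hR hMN)
      (tensorBaseChangesToBaseChange_comp_baseChangeToTensorBaseChanges hR hMN),
    baseChangeToTensorBaseChanges_one_tmul_tmul hR hMN⟩

/-- For commutative rings `A`, `B`, a commutative ring `R` with ring maps `f : A → R`,
`g : B → R`, an `A`-module `M` and a `B`-module `N`, viewing `R` as an `(A ⊗[ℤ] B)`-algebra via
`a ⊗ b ↦ f(a)g(b)` and `M ⊗[ℤ] N` as an `(A ⊗[ℤ] B)`-module via
`(a ⊗ b) • (m ⊗ n) = (a • m) ⊗ (b • n)`, there is an isomorphism of `R`-modules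
`R ⊗[A ⊗[ℤ] B] (M ⊗[ℤ] N) ≅ (R ⊗[A] M) ⊗[R] (R ⊗[B] N)`. -/
theorem baseChange_tensor_iso_tensor_of_baseChanges
    {A B R : Type*} [CommRing A] [CommRing B] [CommRing R]
    (f : A →+* R) (g : B →+* R)
    (M : Type*) [AddCommGroup M] [Module A M]
    (N : Type*) [AddCommGroup N] [Module B N]
    [Algebra A R] (hA : algebraMap A R = f)
    [Algebra B R] (hB : algebraMap B R = g)
    [Algebra (A ⊗[ℤ] B) R]
    (hAB : ∀ (a : A) (b : B), algebraMap (A ⊗[ℤ] B) R (a ⊗ₜ[ℤ] b) = f a * g b)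
    [Module (A ⊗[ℤ] B) (M ⊗[ℤ] N)]
    (hMN : ∀ (a : A) (b : B) (m : M) (n : N),
      (a ⊗ₜ[ℤ] b) • (m ⊗ₜ[ℤ] n) = (a • m) ⊗ₜ[ℤ] (b • n)) :
    Nonempty ((R ⊗[A ⊗[ℤ] B] (M ⊗[ℤ] N)) ≃ₗ[R] ((R ⊗[A] M) ⊗[R] (R ⊗[B] N))) := by
  subst hA hB
  obtain ⟨e, -⟩ := baseChange_tensor_iso_tensor_of_baseChanges_general hAB hMN
  exact ⟨e⟩
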